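/- Let G be a connected graph on n ≥ 11 vertices with independence number n − 4, and suppose G contains a cycle. Then there exists a connected graph on n vertices with independence number n − 4 and strictly smaller A_α spectral radius for every α ∈ [0,1); consequently any minimizer of λ_α over graphs of order n ≥ 11 with independence number n−4 is a tree. -/

import Mathlib

open scoped Classical

/-- The matrix `A_α(G) = α·D(G) + (1−α)·A(G)` over `ℝ`. -/
noncomputable def Aalpha {V : Type*} [Fintype V] (G : SimpleGraph V) (α : ℝ) : Matrix V V ℝ :=
  α • Matrix.diagonal (fun v => (G.degree v : ℝ)) +
    (1 - α) • (Matrix.of fun i j => if G.Adj i j then (1 : ℝ) else 0)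

/-- `lam` is the largest real eigenvalue (spectral radius) of the real symmetric matrix `M`. -/
def IsSpectralRadius {V : Type*} [Fintype V] (M : Matrix V V ℝ) (lam : ℝ) : Prop :=
  (∃ x : V → ℝ, x ≠ 0 ∧ M.mulVec x = lam • x) ∧
    ∀ μ : ℝ, (∃ x : V → ℝ, x ≠ 0 ∧ M.mulVec x = μ • x) → μ ≤ lam

/-- The independence number of `G`: the maximum cardinality of an independent set. -/
noncomputable def indepNum {V : Type*} [Fintype V] (G : SimpleGraph V) : ℕ :=
  sSup {k : ℕ | ∃ s : Finset V, s.card = k ∧ ∀ a ∈ s, ∀ b ∈ s, ¬ G.Adj a b}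



lemma Aalpha_mulVec {V : Type*} [Fintype V] (G : SimpleGraph V) (α : ℝ) (x : V → ℝ) (v : V) :
    (Aalpha G α).mulVec x v =
      ∑ w, (if G.Adj v w then α * x v + (1 - α) * x w else 0) := by
  have hdeg : (G.degree v : ℝ) = ∑ w, (if G.Adj v w then (1 : ℝ) else 0) := by
    rw [← SimpleGraph.card_neighborFinset_eq_degree, SimpleGraph.neighborFinset_eq_filter]
    simp
  unfold Aalpha
  rw [Matrix.add_mulVec, Pi.add_apply, Matrix.smul_mulVec, Matrix.smul_mulVec, Pi.smul_apply,
    Pi.smul_apply, Matrix.mulVec_diagonal, hdeg]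
  simp only [Matrix.mulVec, dotProduct, Matrix.of_apply, smul_eq_mul, Finset.mul_sum,
    Finset.sum_mul]
  rw [← Finset.sum_add_distrib]
  refine Finset.sum_congr rfl fun w _ => ?_
  split_ifs <;> ring

lemma Aalpha_isHermitian {V : Type*} [Fintype V] (G : SimpleGraph V) (α : ℝ) :
    (Aalpha G α).IsHermitian := by
  ext i j
  simp only [Aalpha, Matrix.conjTranspose_apply, Matrix.add_apply, Matrix.smul_apply,
    Matrix.of_apply, Matrix.diagonal_apply, star_trivial, G.adj_comm j i]
  by_cases h : i = j
  · subst h; simp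
  · simp [h, Ne.symm h]

lemma posSemidef_of_spectral {V : Type*} [Fintype V] (M : Matrix V V ℝ) (hM : M.IsHermitian)
    (lam : ℝ) (h : IsSpectralRadius M lam) : (lam • (1 : Matrix V V ℝ) - M).PosSemidef := by
  have hH : (lam • (1 : Matrix V V ℝ) - M).IsHermitian := by
    refine Matrix.IsHermitian.sub ?_ hM
    ext i j
    by_cases hij : i = j
    · subst hij; simp
    · simp [hij, Ne.symm hij]
  rw [hH.posSemidef_iff_eigenvalues_nonneg]
  intro j
  have h1 := hH.mulVec_eigenvectorBasis j
  set y := (hH.eigenvectorBasis j).ofLp with hy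
  have hy0 : y ≠ 0 := by
    intro h0
    have := hH.eigenvectorBasis.orthonormal.ne_zero j
    apply this
    ext i
    exact congrFun h0 i
  have := h.2 (lam - hH.eigenvalues j) ⟨y, hy0, by
    rw [Matrix.sub_mulVec, Matrix.smul_mulVec, Matrix.one_mulVec] at h1
    rw [sub_smul, ← h1]; abel⟩
  simp only [Pi.zero_apply]
  linarith

/-- A nonnegative vector with large Rayleigh quotient is a positive eigenvector. -/
lemma perron {V : Type*} [Fintype V] (G : SimpleGraph V) (hG : G.Connected) (α : ℝ)
    (h0 : 0 ≤ α) (h1 : α < 1) (lam : ℝ) (h : IsSpectralRadius (Aalpha G α) lam)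
    (x : V → ℝ) (hx : ∀ v, 0 ≤ x v) (hx0 : x ≠ 0)
    (hq : lam * ∑ v, x v * x v ≤ ∑ v, x v * (Aalpha G α).mulVec x v) :
    (∀ v, 0 < x v) ∧ ∑ v, x v * (Aalpha G α).mulVec x v = lam * ∑ v, x v * x v := by
  have hP := posSemidef_of_spectral _ (Aalpha_isHermitian G α) lam h
  have e : star x ⬝ᵥ (lam • (1 : Matrix V V ℝ) - Aalpha G α).mulVec x
      = lam * ∑ v, x v * x v - ∑ v, x v * (Aalpha G α).mulVec x v := by
    rw [Matrix.sub_mulVec, Matrix.smul_mulVec, Matrix.one_mulVec]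
    simp only [dotProduct, Pi.sub_apply, Pi.smul_apply, smul_eq_mul, star_trivial, Finset.mul_sum]
    rw [← Finset.sum_sub_distrib]
    refine Finset.sum_congr rfl fun w _ => ?_
    ring
  have hnn := (Matrix.posSemidef_iff_dotProduct_mulVec.1 hP).2 x
  have hz : star x ⬝ᵥ (lam • (1 : Matrix V V ℝ) - Aalpha G α).mulVec x = 0 := by
    rw [e] at hnn ⊢; linarith
  have heq := (hP.dotProduct_mulVec_zero_iff x).1 hz
  refine ⟨?_, by rw [e] at hz; linarith⟩
  have hrow : ∀ v, (Aalpha G α).mulVec x v = lam * x v := by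
    intro v
    have := congrFun heq v
    rw [Matrix.sub_mulVec, Matrix.smul_mulVec, Matrix.one_mulVec] at this
    simp only [Pi.sub_apply, Pi.smul_apply, smul_eq_mul, Pi.zero_apply] at this
    linarith
  have hstep : ∀ v w, G.Adj v w → x v = 0 → x w = 0 := by
    intro v w hvw hv
    have hr := hrow v
    rw [Aalpha_mulVec, hv, mul_zero, mul_zero] at hr
    rw [Finset.sum_eq_zero_iff_of_nonneg] at hr
    swap
    · intro i _
      have := mul_nonneg (sub_nonneg.2 h1.le) (hx i)
      split_ifs <;> linarith
    have := hr w (Finset.mem_univ _)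
    rw [if_pos hvw] at this
    have h2 : (1 - α) * x w = 0 := by linarith
    rcases mul_eq_zero.1 h2 with h3 | h3
    · linarith
    · exact h3
  intro v
  by_contra hv
  have hv0 : x v = 0 := le_antisymm (not_lt.1 hv) (hx v)
  apply hx0
  funext w
  obtain ⟨p⟩ := hG.preconnected v w
  clear hv
  induction p with
  | nil => exact hv0
  | cons hadj p ih => exact ih (hstep _ _ hadj hv0)

/-- Upper bound from a positive strict supersolution. -/
lemma super_bound {V : Type*} [Fintype V] (G : SimpleGraph V) (α : ℝ)
    (h0 : 0 ≤ α) (h1 : α < 1) (mu lam' : ℝ) (h : IsSpectralRadius (Aalpha G α) lam')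
    (x : V → ℝ) (hx : ∀ v, 0 < x v)
    (hs : ∀ v, (Aalpha G α).mulVec x v ≤ mu * x v) : lam' ≤ mu := by
  obtain ⟨⟨y, hy0, hy⟩, -⟩ := h
  obtain ⟨u, hu⟩ : ∃ u, y u ≠ 0 := by
    by_contra hc
    push Not at hc
    exact hy0 (funext hc)
  obtain ⟨v, -, hv⟩ := Finset.exists_max_image Finset.univ (fun v => |y v| / x v) ⟨u, Finset.mem_univ _⟩
  set t := |y v| / x v with ht
  have htpos : 0 < t := lt_of_lt_of_le (div_pos (abs_pos.2 hu) (hx u)) (hv u (Finset.mem_univ _))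
  have hyx : ∀ w, |y w| ≤ t * x w := fun w => (div_le_iff₀ (hx w)).1 (hv w (Finset.mem_univ _))
  have hyv : |y v| = t * x v := by rw [ht]; field_simp [(hx v).ne']
  have hr := congrFun hy v
  have hle : lam' * |y v| ≤ t * (Aalpha G α).mulVec x v := by
    have hb : lam' * |y v| ≤ |lam' * y v| := by
      rw [abs_mul]; exact mul_le_mul_of_nonneg_right (le_abs_self _) (abs_nonneg _)
    refine hb.trans ?_
    rw [show lam' * y v = (Aalpha G α).mulVec y v by rw [hr]; rfl, Aalpha_mulVec, Aalpha_mulVec,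
      Finset.mul_sum]
    refine (Finset.abs_sum_le_sum_abs _ _).trans (Finset.sum_le_sum fun w _ => ?_)
    split_ifs
    · refine (abs_add_le _ _).trans ?_
      rw [abs_mul, abs_mul, abs_of_nonneg h0, abs_of_nonneg (sub_nonneg.2 h1.le)]
      have a1 := mul_le_mul_of_nonneg_left (hyx v) h0
      have a2 := mul_le_mul_of_nonneg_left (hyx w) (sub_nonneg.2 h1.le)
      linarith
    · simp
  have h3 := mul_le_mul_of_nonneg_left (hs v) htpos.le
  rw [hyv] at hle
  have : lam' * (t * x v) ≤ mu * (t * x v) := by linarith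
  exact le_of_mul_le_mul_right this (mul_pos htpos (hx v))

lemma delete_lt {V : Type*} [Fintype V] (G G' : SimpleGraph V) (hG : G.Connected) (hle : G' ≤ G)
    (u w : V) (huw : G.Adj u w) (hn : ¬ G'.Adj u w) (α : ℝ)
    (h0 : 0 ≤ α) (h1 : α < 1) (lam lam' : ℝ) (h : IsSpectralRadius (Aalpha G α) lam)
    (h' : IsSpectralRadius (Aalpha G' α) lam') : lam' < lam := by
  by_contra hcon
  push Not at hcon
  obtain ⟨⟨y, hy0, hy⟩, -⟩ := h'
  set x : V → ℝ := fun v => |y v| with hx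
  have hxn : ∀ v, 0 ≤ x v := fun v => abs_nonneg _
  have hx0 : x ≠ 0 := by
    intro hc; apply hy0; funext v
    exact abs_eq_zero.1 (congrFun hc v)
  have hβ : 0 ≤ 1 - α := by linarith
  have q1 : lam' * ∑ v, x v * x v ≤ ∑ v, x v * (Aalpha G' α).mulVec x v := by
    have : lam' * ∑ v, x v * x v = ∑ v, y v * (Aalpha G' α).mulVec y v := by
      rw [hy, Finset.mul_sum]
      refine Finset.sum_congr rfl fun v _ => ?_
      simp only [hx, abs_mul_abs_self, Pi.smul_apply, smul_eq_mul]; ring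
    rw [this]
    refine Finset.sum_le_sum fun v _ => ?_
    rw [Aalpha_mulVec, Aalpha_mulVec, Finset.mul_sum, Finset.mul_sum]
    refine Finset.sum_le_sum fun z _ => ?_
    split_ifs
    · have e1 : x v * x v = y v * y v := abs_mul_abs_self _
      have e2 : y v * y z ≤ x v * x z := by
        simp only [hx]; rw [← abs_mul]; exact le_abs_self _
      have := mul_le_mul_of_nonneg_left e2 hβ
      have e3 : α * (x v * x v) = α * (y v * y v) := by rw [e1]
      linarith
    · simp
  have hterm : ∀ v z, (if G'.Adj v z then α * x v + (1 - α) * x z else 0) ≤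
      (if G.Adj v z then α * x v + (1 - α) * x z else 0) := by
    intro v z
    have := mul_nonneg h0 (hxn v)
    have := mul_nonneg hβ (hxn z)
    by_cases h : G'.Adj v z
    · rw [if_pos h, if_pos (hle h)]
    · rw [if_neg h]; split_ifs <;> linarith
  have q2 : ∀ v, x v * (Aalpha G' α).mulVec x v ≤ x v * (Aalpha G α).mulVec x v := by
    intro v
    refine mul_le_mul_of_nonneg_left ?_ (hxn v)
    rw [Aalpha_mulVec, Aalpha_mulVec]
    exact Finset.sum_le_sum fun z _ => hterm v z
  have hsq : 0 ≤ ∑ v, x v * x v := Finset.sum_nonneg fun v _ => mul_nonneg (hxn v) (hxn v)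
  have q3 := mul_le_mul_of_nonneg_right hcon hsq
  have q4 := Finset.sum_le_sum (s := Finset.univ) fun v _ => q2 v
  obtain ⟨hpos, heq⟩ := perron G hG α h0 h1 lam h x hxn hx0 (by linarith)
  have q5 : ∑ v, x v * (Aalpha G' α).mulVec x v < ∑ v, x v * (Aalpha G α).mulVec x v := by
    refine Finset.sum_lt_sum (fun v _ => q2 v) ⟨u, Finset.mem_univ _, ?_⟩
    refine mul_lt_mul_of_pos_left ?_ (hpos u)
    rw [Aalpha_mulVec, Aalpha_mulVec]
    refine Finset.sum_lt_sum (fun z _ => hterm u z) ⟨w, Finset.mem_univ _, ?_⟩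
    rw [if_pos huw, if_neg hn]
    have := mul_nonneg h0 (hxn u)
    have := mul_pos (sub_pos.2 h1) (hpos w)
    linarith
  linarith

lemma indep_le {V : Type*} [Fintype V] (G : SimpleGraph V) (s : Finset V)
    (hs : ∀ a ∈ s, ∀ b ∈ s, ¬ G.Adj a b) : s.card ≤ indepNum G := by
  refine le_csSup ⟨Fintype.card V, ?_⟩ ⟨s, rfl, hs⟩
  rintro k ⟨t, rfl, -⟩
  exact Finset.card_le_univ t

lemma indep_exists {V : Type*} [Fintype V] (G : SimpleGraph V) :
    ∃ s : Finset V, s.card = indepNum G ∧ ∀ a ∈ s, ∀ b ∈ s, ¬ G.Adj a b := by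
  refine Nat.sSup_mem (s := {k : ℕ | ∃ s : Finset V, s.card = k ∧ ∀ a ∈ s, ∀ b ∈ s, ¬ G.Adj a b})
    ⟨0, ∅, rfl, by simp⟩ ⟨Fintype.card V, ?_⟩
  rintro k ⟨t, rfl, -⟩
  exact Finset.card_le_univ t

lemma indep_eq {V : Type*} [Fintype V] (G : SimpleGraph V) (C : Finset V) (hC : C.card = 4)
    (hcov : ∀ a b, G.Adj a b → a ∈ C ∨ b ∈ C)
    (f : V → V) (hf : ∀ c ∈ C, G.Adj c (f c)) (hfC : ∀ c ∈ C, f c ∉ C)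
    (hinj : ∀ c ∈ C, ∀ d ∈ C, f c = f d → c = d) : indepNum G = Fintype.card V - 4 := by
  apply le_antisymm
  · obtain ⟨s, hs, hi⟩ := indep_exists G
    have : C.card ≤ sᶜ.card := by
      refine Finset.card_le_card_of_injOn (fun c => if c ∈ s then f c else c) ?_ ?_
      · intro c hc
        simp only [Finset.coe_compl, Set.mem_compl_iff, Finset.mem_coe]
        split_ifs with h
        · exact fun h2 => hi c h _ h2 (hf c hc)
        · exact h
      · intro c hc d hd hcd
        have hc' : c ∈ C := hc
        have hd' : d ∈ C := hd
        simp only at hcd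
        split_ifs at hcd with h1 h2 h2
        · exact hinj c hc' d hd' hcd
        · exact absurd (hcd ▸ hd') (hfC c hc')
        · exact absurd (hcd ▸ hc') (hfC d hd')
        · exact hcd
    rw [Finset.card_compl] at this
    omega
  · have := indep_le G Cᶜ (by
      intro a ha b hb hab
      rw [Finset.mem_compl] at ha hb
      rcases hcov a b hab with h | h <;> contradiction)
    rwa [Finset.card_compl, hC] at this

lemma degree_sum {V : Type*} [Fintype V] (G : SimpleGraph V) (hG : G.Connected)
    (W Y : Finset V) (r : V) (hr : r ∈ W)
    (hWY : ∀ v w, G.Adj v w → v ∉ W → v ∈ Y ∨ w ∈ Y) :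
    Wᶜ.card ≤ ∑ y ∈ Y, G.degree y := by
  have hpar : ∀ v, ∃ w, v ≠ r → G.Adj v w ∧ G.dist r w + 1 = G.dist r v := by
    intro v
    by_cases hv : v = r
    · exact ⟨v, fun h => absurd hv h⟩
    · obtain ⟨p, hp⟩ := (hG.preconnected v r).exists_walk_length_eq_dist
      cases p with
      | nil => exact absurd rfl hv
      | @cons _ w _ hadj q =>
        refine ⟨w, fun _ => ⟨hadj, ?_⟩⟩
        rw [SimpleGraph.Walk.length_cons, G.dist_comm] at hp
        have h1 : G.dist w r ≤ q.length := SimpleGraph.dist_le q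
        rw [G.dist_comm] at h1
        have h2 := hadj.symm.diff_dist_adj (u := r)
        omega
  choose par hpar using hpar
  have hne : ∀ v ∈ Wᶜ, v ≠ r := by
    intro v hv h
    rw [Finset.mem_compl] at hv
    exact hv (h ▸ hr)
  calc Wᶜ.card ≤ (Y.biUnion fun y => G.incidenceFinset y).card := by
        refine Finset.card_le_card_of_injOn (fun v => s(v, par v)) ?_ ?_
        · intro v hv
          have hv' : v ∈ Wᶜ := hv
          have h1 := (hpar v (hne v hv')).1
          simp only [Finset.coe_biUnion, Set.mem_iUnion, Finset.mem_coe,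
            SimpleGraph.mem_incidenceFinset]
          rcases hWY v _ h1 (Finset.mem_compl.1 hv') with h | h
          · exact ⟨v, h, (SimpleGraph.mem_edgeSet G).2 h1, Sym2.mem_mk_left _ _⟩
          · exact ⟨_, h, (SimpleGraph.mem_edgeSet G).2 h1, Sym2.mem_mk_right _ _⟩
        · intro v hv w hw hvw
          have h1 := (hpar v (hne v hv)).2
          have h2 := (hpar w (hne w hw)).2
          simp only [Sym2.eq_iff] at hvw
          rcases hvw with h | ⟨h3, h4⟩
          · exact h.1
          · rw [h4] at h1
            rw [← h3] at h2
            omega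
    _ ≤ ∑ y ∈ Y, (G.incidenceFinset y).card := Finset.card_biUnion_le
    _ = ∑ y ∈ Y, G.degree y := by
        refine Finset.sum_congr rfl fun y _ => ?_
        exact G.card_incidenceFinset_eq_degree y

/-- Either the cover can be matched into its complement, or there is a vertex of large degree. -/
lemma dichotomy {V : Type*} [Fintype V] (G : SimpleGraph V)
    (hn11 : 11 ≤ Fintype.card V) (hG : G.Connected) (hind : indepNum G = Fintype.card V - 4)
    (C : Finset V) (hC : C.card = 4) (hcov : ∀ a b, G.Adj a b → a ∈ C ∨ b ∈ C) :
    (∃ f : V → V, (∀ c ∈ C, G.Adj c (f c)) ∧ (∀ c ∈ C, f c ∉ C) ∧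
      ∀ c ∈ C, ∀ d ∈ C, f c = f d → c = d) ∨
    ∃ h : V, Fintype.card V ≤ 2 * G.degree h + 3 := by
  by_cases hall : ∀ X : Finset C, X.card ≤
      (X.biUnion fun c => Finset.univ.filter fun s => s ∉ C ∧ G.Adj c s).card
  · left
    rw [Finset.all_card_le_biUnion_card_iff_exists_injective] at hall
    obtain ⟨f, hf, hf2⟩ := hall
    refine ⟨fun v => if h : v ∈ C then f ⟨v, h⟩ else v, ?_, ?_, ?_⟩
    · intro c hc
      have := hf2 ⟨c, hc⟩
      simp only [Finset.mem_filter] at this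
      simpa [hc] using this.2.2
    · intro c hc
      have := hf2 ⟨c, hc⟩
      simp only [Finset.mem_filter] at this
      simpa [hc] using this.2.1
    · intro c hc d hd hcd
      simp only [hc, hd, dif_pos] at hcd
      exact congrArg Subtype.val (hf hcd)
  · right
    push Not at hall
    obtain ⟨X', hX'⟩ := hall
    set N := X'.biUnion fun c => Finset.univ.filter fun s => s ∉ C ∧ G.Adj c s with hN
    set X : Finset V := X'.map (Function.Embedding.subtype _) with hX
    have hXc : X.card = X'.card := Finset.card_map _
    have hXC : X ⊆ C := by
      intro v hv
      simp only [hX, Finset.mem_map, Function.Embedding.subtype_apply] at hv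
      obtain ⟨a, -, rfl⟩ := hv
      exact a.2
    have hNm : ∀ x ∈ X, ∀ s, s ∉ C → G.Adj x s → s ∈ N := by
      intro x hx s hs hxs
      simp only [hX, Finset.mem_map, Function.Embedding.subtype_apply] at hx
      obtain ⟨a, ha, rfl⟩ := hx
      rw [hN, Finset.mem_biUnion]
      exact ⟨a, ha, by simp [hs, hxs]⟩
    rw [← hXc] at hX'
    have hX4 : X.card ≤ 4 := hC ▸ Finset.card_le_card hXC
    have hX1 : X.card ≠ 1 := by
      intro h1
      obtain ⟨c, hc⟩ := Finset.card_eq_one.1 h1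
      have hN0 : N = ∅ := Finset.card_eq_zero.1 (by omega)
      have hcC : c ∈ C := hXC (by rw [hc]; simp)
      have := indep_le G (C.erase c)ᶜ (by
        intro a ha b hb hab
        have key : ∀ a b, a ∉ C.erase c → b ∉ C.erase c → G.Adj a b → a ∈ C → False := by
          intro a b ha hb hab haC
          have hac : a = c := by
            by_contra h
            exact ha (Finset.mem_erase.2 ⟨h, haC⟩)
          subst hac
          have hbC : b ∉ C := fun h => hb (Finset.mem_erase.2 ⟨hab.ne', h⟩)
          have := hNm a (by rw [hc]; simp) b hbC hab
          rw [hN0] at this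
          simp at this
        rw [Finset.mem_compl] at ha hb
        rcases hcov a b hab with h | h
        · exact key a b ha hb hab h
        · exact key b a hb ha hab.symm h)
      rw [Finset.card_compl, Finset.card_erase_of_mem hcC, hC, hind] at this
      omega
    obtain ⟨r, hr⟩ : X.Nonempty := Finset.card_pos.1 (by omega)
    have hsum := degree_sum G hG (X ∪ N) (C \ X) r (Finset.mem_union_left _ hr) (by
      intro v w hvw hv
      simp only [Finset.mem_union, not_or] at hv
      simp only [Finset.mem_sdiff]
      by_contra hcon
      push Not at hcon
      have hvC : v ∉ C := fun h => hv.1 (hcon.1 h)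
      have hwC : w ∈ C := (hcov v w hvw).resolve_left hvC
      exact hv.2 (hNm w (hcon.2 hwC) v hvC hvw.symm))
    have hWc : (X ∪ N).card ≤ X.card + N.card := Finset.card_union_le _ _
    rw [Finset.card_compl] at hsum
    have hY : (C \ X).card = 4 - X.card := by rw [Finset.card_sdiff_of_subset hXC, hC]
    by_contra hcon
    push Not at hcon
    have hb : ∑ y ∈ C \ X, 2 * G.degree y ≤ ∑ y ∈ C \ X, (Fintype.card V - 4) :=
      Finset.sum_le_sum fun y _ => by have := hcon y; omega
    rw [← Finset.mul_sum, Finset.sum_const, hY, smul_eq_mul] at hb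
    have hcases : X.card = 2 ∨ X.card = 3 ∨ X.card = 4 := by omega
    rcases hcases with h | h | h <;> rw [h] at hb <;> omega

lemma caseA {V : Type*} [Fintype V] (G : SimpleGraph V) (hG : G.Connected)
    (hcyc : ¬ G.IsAcyclic)
    (C : Finset V) (hC : C.card = 4) (hcov : ∀ a b, G.Adj a b → a ∈ C ∨ b ∈ C)
    (f : V → V) (hf : ∀ c ∈ C, G.Adj c (f c)) (hfC : ∀ c ∈ C, f c ∉ C)
    (hinj : ∀ c ∈ C, ∀ d ∈ C, f c = f d → c = d) :
    ∃ G' : SimpleGraph V, G'.Connected ∧ indepNum G' = Fintype.card V - 4 ∧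
      ∀ α ∈ Set.Ico (0 : ℝ) 1, ∀ lam lam' : ℝ,
        IsSpectralRadius (Aalpha G α) lam →
        IsSpectralRadius (Aalpha G' α) lam' → lam' < lam := by
  have key : ∃ u w, G.Adj u w ∧ ¬ G.IsBridge s(u, w) ∧ ∀ c ∈ C, s(c, f c) ≠ s(u, w) := by
    unfold SimpleGraph.IsAcyclic at hcyc
    push Not at hcyc
    obtain ⟨v, p, hp⟩ := hcyc
    have hnil := hp.not_nil
    have a1 := SimpleGraph.Walk.adj_snd hnil
    have a2 := (SimpleGraph.Walk.adj_penultimate hnil).symm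
    have b1 : ¬ G.IsBridge s(v, p.snd) := fun h =>
      (SimpleGraph.isBridge_iff_forall_cycle_notMem ((SimpleGraph.mem_edgeSet G).2 a1)).1 h p hp
        (SimpleGraph.Walk.mk_start_snd_mem_edges hnil)
    have b2 : ¬ G.IsBridge s(v, p.penultimate) := fun h =>
      (SimpleGraph.isBridge_iff_forall_cycle_notMem ((SimpleGraph.mem_edgeSet G).2 a2)).1 h p hp
        (Sym2.eq_swap ▸ SimpleGraph.Walk.mk_penultimate_end_mem_edges hnil)
    have hne := hp.snd_ne_penultimate
    by_contra hcon
    push Not at hcon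
    obtain ⟨c, hc, hc2⟩ := hcon _ _ a1 b1
    obtain ⟨d, hd, hd2⟩ := hcon _ _ a2 b2
    rw [Sym2.eq_iff] at hc2 hd2
    rcases hc2 with ⟨h1, h2⟩ | ⟨h1, h2⟩ <;> rcases hd2 with ⟨h3, h4⟩ | ⟨h3, h4⟩
    · exact hne (by rw [← h2, ← h4, h1, h3])
    · exact hfC d hd (by rw [h4, ← h1]; exact hc)
    · exact hfC c hc (by rw [h2, ← h3]; exact hd)
    · exact hne (by rw [← h1, ← h3]; exact hinj c hc d hd (h2.trans h4.symm))
  obtain ⟨u, w, huw, hb, hM⟩ := key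
  refine ⟨G.deleteEdges {s(u, w)}, hG.connected_delete_edge_of_not_isBridge hb, ?_, ?_⟩
  · refine indep_eq _ C hC (fun a b hab => hcov a b (SimpleGraph.deleteEdges_le _ hab)) f ?_ hfC hinj
    intro c hc
    rw [SimpleGraph.deleteEdges_adj]
    exact ⟨hf c hc, fun h => hM c hc h⟩
  · intro α hα lam lam' h h'
    exact delete_lt G _ hG (SimpleGraph.deleteEdges_le _) u w huw
      (by simp) α hα.1 hα.2 lam lam' h h'

lemma mu_exists (α m : ℝ) (h0 : 0 ≤ α) (h1 : α < 1) (hm : 4 ≤ m) :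
    ∃ μ : ℝ, 2 ≤ μ ∧ α * m ≤ μ ∧ (μ - α * m) * (μ - α) = (1 - α) ^ 2 * m := by
  have hcont : ContinuousOn (fun x : ℝ => (x - α * m) * (x - α) - (1 - α) ^ 2 * m)
      (Set.Icc (max 2 (α * m)) (α * m + m + 1)) := by fun_prop
  have hab : max 2 (α * m) ≤ α * m + m + 1 := by
    have : 0 ≤ α * m := by positivity
    exact max_le (by linarith) (by linarith)
  have hmem : (0 : ℝ) ∈ Set.Icc
      ((fun x : ℝ => (x - α * m) * (x - α) - (1 - α) ^ 2 * m) (max 2 (α * m)))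
      ((fun x : ℝ => (x - α * m) * (x - α) - (1 - α) ^ 2 * m) (α * m + m + 1)) := by
    constructor
    · rcases max_choice 2 (α * m) with h | h
      · simp only [h]; nlinarith
      · simp only [h]
        have : 0 ≤ (1 - α) ^ 2 * m := by positivity
        nlinarith
    · simp only
      have e1 : 0 ≤ α * m := by positivity
      have e2 : (1 - α) ^ 2 ≤ 1 := by nlinarith
      have e3 : (1 - α) ^ 2 * m ≤ m := by nlinarith
      have e4 : (m + 1) * m ≤ (m + 1) * (α * m + m + 1 - α) := by
        apply mul_le_mul_of_nonneg_left <;> linarith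
      nlinarith
  obtain ⟨μ, hμ, hμ2⟩ := intermediate_value_Icc hab hcont hmem
  refine ⟨μ, (le_max_left _ _).trans hμ.1, (le_max_right _ _).trans hμ.1, ?_⟩
  simp only at hμ2
  linarith

lemma star_lt {V : Type*} [Fintype V] (G : SimpleGraph V) (hG : G.Connected) (α : ℝ)
    (h0 : 0 ≤ α) (h1 : α < 1) (lam : ℝ) (h : IsSpectralRadius (Aalpha G α) lam)
    (c : V) (m : ℕ) (hm : m ≤ G.degree c) (hmV : m + 1 < Fintype.card V) (μ : ℝ) (hμ : 2 ≤ μ)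
    (hroot : (μ - α * m) * (μ - α) = (1 - α) ^ 2 * m) : μ < lam := by
  by_contra hcon
  push Not at hcon
  obtain ⟨N, hN, hNc⟩ := Finset.exists_subset_card_eq (s := G.neighborFinset c) (n := m)
    (by rw [SimpleGraph.card_neighborFinset_eq_degree]; exact hm)
  have hadj : ∀ w ∈ N, G.Adj c w := fun w hw => (SimpleGraph.mem_neighborFinset _ _ _).1 (hN hw)
  have hcN : c ∉ N := fun hc => (hadj c hc).ne rfl
  set x : V → ℝ := fun v => if v = c then μ - α else if v ∈ N then 1 - α else 0 with hx
  have hβ : 0 < 1 - α := by linarith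
  have hp : 0 < μ - α := by linarith
  have hxn : ∀ v, 0 ≤ x v := by
    intro v; simp only [hx]; split_ifs <;> linarith
  have hxc : x c = μ - α := by simp [hx]
  have hxN : ∀ w ∈ N, x w = 1 - α := by
    intro w hw
    have : w ≠ c := fun h => hcN (h ▸ hw)
    simp [hx, this, hw]
  have hx0 : x ≠ 0 := by
    intro hc
    have := congrFun hc c
    rw [hxc] at this
    simp only [Pi.zero_apply] at this
    linarith
  have hterm : ∀ v z, 0 ≤ (if G.Adj v z then α * x v + (1 - α) * x z else 0) := by
    intro v z
    have := mul_nonneg h0 (hxn v)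
    have := mul_nonneg hβ.le (hxn z)
    split_ifs <;> linarith
  have hrow : ∀ v, μ * (x v * x v) ≤ x v * (Aalpha G α).mulVec x v := by
    intro v
    rw [Aalpha_mulVec]
    by_cases hv : v = c
    · subst hv
      have : μ * x v ≤ ∑ w, (if G.Adj v w then α * x v + (1 - α) * x w else 0) := by
        calc μ * x v = ∑ w ∈ N, (α * (μ - α) + (1 - α) * (1 - α)) := by
              rw [Finset.sum_const, hNc, nsmul_eq_mul, hxc]; linarith
          _ = ∑ w ∈ N, (if G.Adj v w then α * x v + (1 - α) * x w else 0) := by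
              refine Finset.sum_congr rfl fun w hw => ?_
              rw [if_pos (hadj w hw), hxc, hxN w hw]
          _ ≤ _ := Finset.sum_le_sum_of_subset_of_nonneg (Finset.subset_univ _)
              fun w _ _ => hterm v w
      have := mul_le_mul_of_nonneg_left this (hxn v)
      linarith
    · by_cases hvN : v ∈ N
      · have h2 : (if G.Adj v c then α * x v + (1 - α) * x c else 0) ≤
            ∑ w, (if G.Adj v w then α * x v + (1 - α) * x w else 0) :=
          Finset.single_le_sum (fun w _ => hterm v w) (Finset.mem_univ c)
        rw [if_pos (hadj v hvN).symm, hxc] at h2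
        have h3 : μ * x v ≤ ∑ w, (if G.Adj v w then α * x v + (1 - α) * x w else 0) := by
          refine le_trans (le_of_eq ?_) h2
          rw [hxN v hvN]; ring
        have := mul_le_mul_of_nonneg_left h3 (hxn v)
        linarith
      · have : x v = 0 := by simp [hx, hv, hvN]
        rw [this]; simp
  have hsq : 0 ≤ ∑ v, x v * x v := Finset.sum_nonneg fun v _ => mul_nonneg (hxn v) (hxn v)
  have q3 := mul_le_mul_of_nonneg_right hcon hsq
  have q4 := Finset.sum_le_sum (s := Finset.univ) fun v _ => hrow v
  rw [← Finset.mul_sum] at q4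
  have hpos := (perron G hG α h0 h1 lam h x hxn hx0 (by linarith)).1
  have hcard : (insert c N).card < Fintype.card V := by
    rw [Finset.card_insert_of_notMem hcN, hNc]; exact hmV
  obtain ⟨v, hv⟩ : ∃ v, v ∉ insert c N := by
    by_contra hc
    push Not at hc
    rw [Finset.eq_univ_iff_forall.2 hc, Finset.card_univ] at hcard
    exact lt_irrefl _ hcard
  rw [Finset.mem_insert, not_or] at hv
  have := hpos v
  simp [hx, hv.1, hv.2] at this

/-- Parent function of the double broom on `{0, 1, ...}`: path `0 - 1 - ... - 6`, and leaves
attached to `0` (labels `7, ..., 6 + l`) or to `6` (labels `≥ 7 + l`). -/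
def brPar (l i : ℕ) : ℕ := if i < 7 then i - 1 else if i < 7 + l then 0 else 6

def brAdj (l i j : ℕ) : Prop := (0 < i ∧ brPar l i = j) ∨ (0 < j ∧ brPar l j = i)

lemma brPar_lt (l i : ℕ) (hi : 0 < i) : brPar l i < i := by
  unfold brPar; split_ifs <;> omega

/-- The double broom, transported to `V` along a labelling. -/
def broom {V : Type*} {n : ℕ} (l : ℕ) (e : V ≃ Fin n) : SimpleGraph V where
  Adj u v := brAdj l (e u) (e v)
  symm := ⟨fun u v h => Or.symm h⟩
  loopless := ⟨fun u h => by
    rcases h with h | h <;> · have := brPar_lt l _ h.1; omega⟩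

lemma broom_connected {V : Type*} {n : ℕ} (l : ℕ) (e : V ≃ Fin n) (hn : 11 ≤ n) :
    (broom l e).Connected := by
  have hreach : ∀ i (hi : i < n), (broom l e).Reachable (e.symm ⟨i, hi⟩)
      (e.symm ⟨0, by omega⟩) := by
    intro i
    induction i using Nat.strong_induction_on with
    | _ i ih =>
      intro hi
      by_cases h : i = 0
      · subst h; exact SimpleGraph.Reachable.refl _
      · have hlt := brPar_lt l i (by omega)
        refine SimpleGraph.Reachable.trans (SimpleGraph.Adj.reachable ?_)
          (ih (brPar l i) hlt (by omega))
        left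
        simp only [Equiv.apply_symm_apply]
        exact ⟨by omega, trivial⟩
  have : Nonempty V := ⟨e.symm ⟨0, by omega⟩⟩
  refine ⟨fun u v => ?_⟩
  have hu := hreach (e u) (e u).2
  have hv := hreach (e v) (e v).2
  simp only [Fin.eta, Equiv.symm_apply_apply] at hu hv
  exact hu.trans hv.symm

lemma broom_indep {V : Type*} [Fintype V] {n : ℕ} (l : ℕ) (e : V ≃ Fin n) (hn : 11 ≤ n)
    (hl : 1 ≤ l) (hl2 : 8 + l ≤ n) : indepNum (broom l e) = Fintype.card V - 4 := by
  let g : ℕ → V := fun i => if h : i < n then e.symm ⟨i, h⟩ else e.symm ⟨0, by omega⟩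
  have hg : ∀ i, i < n → ((e (g i) : Fin n) : ℕ) = i := by
    intro i hi; simp [g, hi]
  have hge : ∀ v, g (e v) = v := by intro v; simp [g]
  let C : Finset V := ({0, 2, 4, 6} : Finset ℕ).image g
  have hmem : ∀ v, v ∈ C ↔ ((e v : ℕ) = 0 ∨ (e v : ℕ) = 2 ∨ (e v : ℕ) = 4 ∨ (e v : ℕ) = 6) := by
    intro v
    simp only [C, Finset.mem_image, Finset.mem_insert, Finset.mem_singleton]
    constructor
    · rintro ⟨i, hi, rfl⟩
      rw [hg i (by omega)]; exact hi
    · intro h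
      exact ⟨e v, h, hge v⟩
  have hC : C.card = 4 := by
    rw [Finset.card_image_of_injOn]
    · rfl
    · intro i hi j hj hij
      simp only [Finset.coe_insert, Finset.coe_singleton, Set.mem_insert_iff,
        Set.mem_singleton_iff] at hi hj
      have := congrArg (fun v => ((e v : Fin n) : ℕ)) hij
      beta_reduce at this
      rwa [hg i (by omega), hg j (by omega)] at this
  let k : ℕ → ℕ := fun i => if i = 0 then 7 else if i = 2 then 1 else if i = 4 then 3 else n - 1
  have hk : ∀ i, k i < n := by intro i; simp only [k]; split_ifs <;> omega
  have hcov : ∀ i j, brAdj l i j → (i = 0 ∨ i = 2 ∨ i = 4 ∨ i = 6) ∨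
      (j = 0 ∨ j = 2 ∨ j = 4 ∨ j = 6) := by
    intro i j h
    unfold brAdj brPar at h
    rcases h with ⟨h1, h2⟩ | ⟨h1, h2⟩ <;> split_ifs at h2 <;> omega
  refine indep_eq _ C hC ?_ (fun v => g (k (e v))) ?_ ?_ ?_
  · intro a b hab
    rw [hmem, hmem]
    exact hcov _ _ hab
  · intro c hc
    rw [hmem] at hc
    change brAdj l _ _
    rw [hg _ (hk _)]
    generalize ((e c : Fin n) : ℕ) = i at hc ⊢
    unfold brAdj brPar
    rcases hc with rfl | rfl | rfl | rfl
    · right; simp [k]; omega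
    · left; simp [k]
    · left; simp [k]
    · right
      simp only [k]
      norm_num
      refine ⟨by omega, ?_⟩
      rw [if_neg (by omega), if_neg (by omega)]
  · intro c hc
    rw [hmem] at hc ⊢
    rw [hg _ (hk _)]
    rcases hc with h | h | h | h <;> simp only [k, h] <;> norm_num
    omega
  · intro c hc d hd hcd
    rw [hmem] at hc hd
    have := congrArg (fun v => ((e v : Fin n) : ℕ)) hcd
    beta_reduce at this
    rw [hg _ (hk _), hg _ (hk _)] at this
    apply e.injective
    apply Fin.ext
    simp only [k] at this
    split_ifs at this <;> omega

/-- Test vector on the double broom. -/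
noncomputable def brVec (K t : ℝ) (i : ℕ) : ℝ :=
  if i < 7 then (if i % 2 = 0 then K else 2) else t

lemma brSum (l n : ℕ) (hl2 : 8 + l ≤ n) (F : ℕ → ℝ) :
    ∑ i ∈ Finset.range n, F i = (F 0 + F 1 + F 2 + F 3 + F 4 + F 5 + F 6) +
      ∑ i ∈ Finset.Ico 7 (7 + l), F i + ∑ i ∈ Finset.Ico (7 + l) n, F i := by
  rw [Finset.range_eq_Ico, ← Finset.sum_Ico_consecutive F (show 0 ≤ 7 + l by omega)
    (show 7 + l ≤ n by omega), ← Finset.sum_Ico_consecutive F (show 0 ≤ 7 by omega)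
    (show 7 ≤ 7 + l by omega), ← Finset.range_eq_Ico]
  simp [Finset.sum_range_succ]

lemma hub_ineq (α μ K t m c : ℝ) (h0 : 0 ≤ α) (h1 : α < 1) (hμ : 2 ≤ μ)
    (hK : (1 - α) * K = μ - 2 * α) (hK2 : 2 ≤ K) (ht : t * (μ - α) = (1 - α) * K)
    (ht0 : 0 < t) (hroot : (μ - α * m) * (μ - α) = (1 - α) ^ 2 * m) (hc : c ≤ m - 2) :
    c * (α * K + (1 - α) * t) + (α * K + (1 - α) * 2) ≤ μ * K := by
  have hp : 0 < μ - α := by linarith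
  have hpos : 0 ≤ α * K + (1 - α) * t := by
    have := mul_nonneg h0 (by linarith : (0 : ℝ) ≤ K)
    have := mul_nonneg (by linarith : (0 : ℝ) ≤ 1 - α) ht0.le
    linarith
  have e1 := mul_le_mul_of_nonneg_right hc hpos
  suffices (m - 2) * (α * K + (1 - α) * t) + (α * K + (1 - α) * 2) ≤ μ * K by linarith
  have hfin : 0 ≤ (μ * K - ((m - 2) * (α * K + (1 - α) * t) + (α * K + (1 - α) * 2))) * (μ - α) := by
    have : (μ * K - ((m - 2) * (α * K + (1 - α) * t) + (α * K + (1 - α) * 2))) * (μ - α)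
        = K * ((μ - α * m) * (μ - α)) + α * K * (μ - α) - (m - 2) * (1 - α) * (t * (μ - α))
          - 2 * (1 - α) * (μ - α) := by ring
    rw [this, hroot, ht]
    have e : μ = (1 - α) * K + 2 * α := by linarith
    rw [e]
    have : 0 ≤ α * (1 - α) * (K ^ 2 - 2) + α ^ 2 * K := by
      have : 0 ≤ K ^ 2 - 2 := by nlinarith
      have : 0 ≤ 1 - α := by linarith
      positivity
    nlinarith
  have := nonneg_of_mul_nonneg_left hfin hp
  linarith

lemma broom_row (l n : ℕ) (hl : 1 ≤ l) (hl2 : 8 + l ≤ n) (hl3 : n ≤ 7 + 2 * l)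
    (α μ K t : ℝ) (h0 : 0 ≤ α) (h1 : α < 1) (hμ : 2 ≤ μ)
    (hK : (1 - α) * K = μ - 2 * α) (hK2 : 2 ≤ K) (ht : t * (μ - α) = (1 - α) * K)
    (ht0 : 0 < t) (hroot : (μ - α * (l + 2 : ℕ)) * (μ - α) = (1 - α) ^ 2 * (l + 2 : ℕ))
    (a : ℕ) (ha : a < n) :
    ∑ i ∈ Finset.range n, (if brAdj l a i then α * brVec K t a + (1 - α) * brVec K t i else 0)
      ≤ μ * brVec K t a := by
  rw [brSum l n hl2]
  have hA : ∀ i ∈ Finset.Ico 7 (7 + l), (if brAdj l a i then α * brVec K t a + (1 - α) * brVec K t i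
      else 0) = if a = 0 then α * K + (1 - α) * t else 0 := by
    intro i hi
    rw [Finset.mem_Ico] at hi
    have : brAdj l a i ↔ a = 0 := by
      unfold brAdj brPar
      constructor
      · rintro (⟨p, q⟩ | ⟨p, q⟩) <;> split_ifs at q <;> omega
      · rintro rfl; right; split_ifs <;> omega
    by_cases h : a = 0
    · rw [if_pos (this.2 h), if_pos h]
      simp [brVec, h, show ¬ i < 7 by omega]
    · rw [if_neg (fun q => h (this.1 q)), if_neg h]
  have hB : ∀ i ∈ Finset.Ico (7 + l) n, (if brAdj l a i then α * brVec K t a + (1 - α) * brVec K t i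
      else 0) = if a = 6 then α * K + (1 - α) * t else 0 := by
    intro i hi
    rw [Finset.mem_Ico] at hi
    have : brAdj l a i ↔ a = 6 := by
      unfold brAdj brPar
      constructor
      · rintro (⟨p, q⟩ | ⟨p, q⟩) <;> split_ifs at q <;> omega
      · rintro rfl; right; split_ifs <;> omega
    by_cases h : a = 6
    · rw [if_pos (this.2 h), if_pos h]
      simp [brVec, h, show ¬ i < 7 by omega]
    · rw [if_neg (fun q => h (this.1 q)), if_neg h]
  rw [Finset.sum_congr rfl hA, Finset.sum_congr rfl hB, Finset.sum_const, Finset.sum_const,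
    Nat.card_Ico, Nat.card_Ico, nsmul_eq_mul, nsmul_eq_mul]
  have hKK : (1 - α) * 4 ≤ (1 - α) * K * K := by nlinarith
  have hub := fun c hc => hub_ineq α μ K t ((l + 2 : ℕ) : ℝ) c h0 h1 hμ hK hK2 ht ht0 hroot hc
  by_cases ha7 : a < 7
  · interval_cases a
    · have := hub (7 + l - 7 : ℕ) (by push_cast; simp)
      simp [brAdj, brPar, brVec] at this ⊢
      linarith
    · simp [brAdj, brPar, brVec]; nlinarith
    · simp [brAdj, brPar, brVec]; nlinarith
    · simp [brAdj, brPar, brVec]; nlinarith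
    · simp [brAdj, brPar, brVec]; nlinarith
    · simp [brAdj, brPar, brVec]; nlinarith
    · have hh : n - (7 + l) ≤ l := by omega
      have hh' : ((n - (7 + l) : ℕ) : ℝ) ≤ l := by exact_mod_cast hh
      have := hub (n - (7 + l) : ℕ) (by push_cast; linarith)
      simp [brAdj, brPar, brVec] at this ⊢
      linarith
  · have e1 : a ≠ 0 := by omega
    have e2 : a ≠ 6 := by omega
    by_cases h : a < 7 + l
    · simp [brAdj, brPar, brVec, ha7, h, e1, e2, Ne.symm e1, Ne.symm e2,
        show a ≠ 1 by omega, show a ≠ 2 by omega, show a ≠ 3 by omega, show a ≠ 4 by omega,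
        show a ≠ 5 by omega, show 0 < a by omega, show 1 ≠ a by omega, show 2 ≠ a by omega,
        show 3 ≠ a by omega, show 4 ≠ a by omega, show 5 ≠ a by omega]
      nlinarith
    · simp [brAdj, brPar, brVec, ha7, h, e1, e2, Ne.symm e1, Ne.symm e2,
        show a ≠ 1 by omega, show a ≠ 2 by omega, show a ≠ 3 by omega, show a ≠ 4 by omega,
        show a ≠ 5 by omega, show 0 < a by omega, show 1 ≠ a by omega, show 2 ≠ a by omega,
        show 3 ≠ a by omega, show 4 ≠ a by omega, show 5 ≠ a by omega]
      nlinarith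

lemma caseB {V : Type*} [Fintype V] (G : SimpleGraph V) (hG : G.Connected)
    (hn11 : 11 ≤ Fintype.card V) (c : V) (hc : Fintype.card V ≤ 2 * G.degree c + 3) :
    ∃ G' : SimpleGraph V, G'.Connected ∧ indepNum G' = Fintype.card V - 4 ∧
      ∀ α ∈ Set.Ico (0 : ℝ) 1, ∀ lam lam' : ℝ,
        IsSpectralRadius (Aalpha G α) lam →
        IsSpectralRadius (Aalpha G' α) lam' → lam' < lam := by
  obtain ⟨n, hn⟩ : ∃ n, n = Fintype.card V := ⟨_, rfl⟩
  obtain ⟨l, hl⟩ : ∃ l, l = (n - 6) / 2 := ⟨_, rfl⟩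
  let e : V ≃ Fin n := Fintype.equivFinOfCardEq hn.symm
  refine ⟨broom l e, broom_connected l e (by omega),
    broom_indep l e (by omega) (by omega) (by omega), ?_⟩
  rintro α ⟨h0, h1⟩ lam lam' h h'
  have hl4 : (4 : ℝ) ≤ ((l + 2 : ℕ) : ℝ) := by
    have : 4 ≤ l + 2 := by omega
    exact_mod_cast this
  obtain ⟨μ, hμ2, -, hroot⟩ := mu_exists α ((l + 2 : ℕ) : ℝ) h0 h1 hl4
  have hlt := star_lt G hG α h0 h1 lam h c (l + 2) (by omega) (by omega) μ hμ2 hroot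
  refine lt_of_le_of_lt ?_ hlt
  have hβ : 0 < 1 - α := by linarith
  have hp : 0 < μ - α := by linarith
  set K := (μ - 2 * α) / (1 - α) with hKdef
  have hK : (1 - α) * K = μ - 2 * α := by rw [hKdef]; field_simp
  have hK2 : 2 ≤ K := by rw [hKdef, le_div_iff₀ hβ]; linarith
  set t := (1 - α) * K / (μ - α) with htdef
  have ht : t * (μ - α) = (1 - α) * K := by rw [htdef]; field_simp
  have ht0 : 0 < t := div_pos (mul_pos hβ (by linarith)) hp
  refine super_bound (broom l e) α h0 h1 μ lam' h' (fun v => brVec K t (e v)) ?_ ?_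
  · intro v
    unfold brVec
    split_ifs <;> linarith
  · intro v
    rw [Aalpha_mulVec]
    have := broom_row l n (by omega) (by omega) (by omega) α μ K t h0 h1 hμ2 hK hK2 ht ht0 hroot
      (e v) (e v).2
    rw [← Fin.sum_univ_eq_sum_range (fun i => if brAdj l (e v) i then
      α * brVec K t (e v) + (1 - α) * brVec K t i else 0) n] at this
    rw [← Equiv.sum_comp e] at this
    exact this

theorem stmt16 {V : Type*} [Fintype V] (G : SimpleGraph V) (n : ℕ)
    (hn : Fintype.card V = n) (hn11 : 11 ≤ n)
    (hG : G.Connected) (hind : indepNum G = n - 4)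
    (hcyc : ¬ G.IsAcyclic) :
    ∃ G' : SimpleGraph V, G'.Connected ∧ indepNum G' = n - 4 ∧
      ∀ α ∈ Set.Ico (0 : ℝ) 1, ∀ lam lam' : ℝ,
        IsSpectralRadius (Aalpha G α) lam →
        IsSpectralRadius (Aalpha G' α) lam' → lam' < lam := by
  subst hn
  obtain ⟨S, hS, hSi⟩ := indep_exists G
  rw [hind] at hS
  have hC : Sᶜ.card = 4 := by rw [Finset.card_compl, hS]; omega
  have hcov : ∀ a b, G.Adj a b → a ∈ Sᶜ ∨ b ∈ Sᶜ := by
    intro a b hab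
    by_contra hcon
    push Not at hcon
    simp only [Finset.mem_compl, not_not] at hcon
    exact hSi a hcon.1 b hcon.2 hab
  rcases dichotomy G hn11 hG hind Sᶜ hC hcov with ⟨f, hf, hfC, hinj⟩ | ⟨c, hc⟩
  · exact caseA G hG hcyc Sᶜ hC hcov f hf hfC hinj
  · exact caseB G hG hn11 c hc
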